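/- arXiv:2310.14600 — 2 statements merged into one kernel-verified Lean document; each statement's English description precedes it below -/
import Mathlib

section
/- In a valid ledger the first recorded owner of an asset is its minter: if bc is valid and the entry mint a α occurs in bc, then the head of the owner history ownerHistory bc α is a (i.e. (ownerHistory bc α).head? = some a). -/
/-- An entry of the blockchain ledger. -/
inductive Entry (Agent Asset : Type*) where
  | mint (a : Agent) (α : Asset)
  | transfer (old new : Agent) (α : Asset)
  | pay (b s : Agent) (c : ℝ)

variable {Agent Asset : Type*}

/-- If `e` is a token entry for asset `α`, the agent it assigns ownership of `α` to;
otherwise `none`. -/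
def tokenOwner [DecidableEq Asset] (e : Entry Agent Asset) (α : Asset) : Option Agent :=
  match e with
  | .mint a β => if β = α then some a else none
  | .transfer _ new β => if β = α then some new else none
  | .pay _ _ _ => none

/-- `Owns bc a α`: some position of `bc` holds a token entry for `α` assigning
ownership to `a`, and no later position holds a token entry for `α`. -/
def Owns [DecidableEq Asset] (bc : List (Entry Agent Asset)) (a : Agent) (α : Asset) : Prop :=
  ∃ i : Fin bc.length, tokenOwner (bc.get i) α = some a ∧
    ∀ j : Fin bc.length, (i : ℕ) < (j : ℕ) → tokenOwner (bc.get j) α = none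

/-- The current owner of `α`, computed by a left fold over the ledger. -/
def currentOwner [DecidableEq Asset] (bc : List (Entry Agent Asset)) (α : Asset) : Option Agent :=
  bc.foldl (fun acc e => match tokenOwner e α with | some a => some a | none => acc) none

/-- A ledger is valid iff each mint concerns an asset currently unowned and each
transfer is from the current owner; payments have no precondition. -/
def Valid [DecidableEq Asset] (bc : List (Entry Agent Asset)) : Prop :=
  ∀ i : Fin bc.length,
    match bc.get i with
    | .mint _ α => currentOwner (bc.take i) α = none
    | .transfer old _ α => currentOwner (bc.take i) α = some old
    | .pay _ _ _ => True

/-- The list, in ledger order, of agents assigned ownership of `α` by the token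
entries for `α` in `bc`. -/
def ownerHistory [DecidableEq Asset] (bc : List (Entry Agent Asset)) (α : Asset) : List Agent :=
  bc.filterMap (fun e => tokenOwner e α)

/-- `isToken e` holds iff `e` is a mint or a transfer. -/
def isToken : Entry Agent Asset → Bool
  | .mint _ _ => true
  | .transfer _ _ _ => true
  | .pay _ _ _ => false

section

variable [DecidableEq Asset]

theorem ownerHistory_append (s t : List (Entry Agent Asset)) (α : Asset) :
    ownerHistory (s ++ t) α = ownerHistory s α ++ ownerHistory t α :=
  List.filterMap_append

theorem ownerHistory_cons (e : Entry Agent Asset) (bc : List (Entry Agent Asset)) (α : Asset) :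
    ownerHistory (e :: bc) α = (tokenOwner e α).toList ++ ownerHistory bc α := by
  cases he : tokenOwner e α <;> simp [ownerHistory, he]

theorem currentOwner_concat (bc : List (Entry Agent Asset)) (e : Entry Agent Asset) (α : Asset) :
    currentOwner (bc ++ [e]) α = (tokenOwner e α).or (currentOwner bc α) := by
  cases he : tokenOwner e α <;> simp [currentOwner, he]

theorem currentOwner_eq_getLast?_ownerHistory (bc : List (Entry Agent Asset)) (α : Asset) :
    currentOwner bc α = (ownerHistory bc α).getLast? := by
  induction bc using List.reverseRecOn with
  | nil => rfl
  | append_singleton bc e ih =>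
    rw [currentOwner_concat, ownerHistory_append, ownerHistory_cons, List.getLast?_append, ih]
    cases tokenOwner e α <;> rfl

theorem currentOwner_eq_none_iff {bc : List (Entry Agent Asset)} {α : Asset} :
    currentOwner bc α = none ↔ ownerHistory bc α = [] := by
  rw [currentOwner_eq_getLast?_ownerHistory, List.getLast?_eq_none_iff]

theorem Valid.currentOwner_eq_none_of_append_mint {s t : List (Entry Agent Asset)} {a : Agent}
    {α : Asset} (h : Valid (s ++ .mint a α :: t)) : currentOwner s α = none := by
  simpa using h ⟨s.length, by simp⟩

theorem ownerHistory_head_eq_minter_general {s t : List (Entry Agent Asset)}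
    {e : Entry Agent Asset} {a : Agent} {α : Asset} (hs : currentOwner s α = none)
    (he : tokenOwner e α = some a) : (ownerHistory (s ++ e :: t) α).head? = some a := by
  rw [ownerHistory_append, currentOwner_eq_none_iff.mp hs, ownerHistory_cons, he]
  rfl

end

theorem ownerHistory_head_eq_minter [DecidableEq Asset]
    (bc : List (Entry Agent Asset)) (h : Valid bc) (a : Agent) (α : Asset)
    (hmem : Entry.mint a α ∈ bc) :
    (ownerHistory bc α).head? = some a := by
  obtain ⟨s, t, rfl⟩ := List.append_of_mem hmem
  exact ownerHistory_head_eq_minter_general h.currentOwner_eq_none_of_append_mint (if_pos rfl)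
end

section
/- Correctness of the blockchain implementation of ownership: if the ledger bc is valid, then for every asset α there exists a unique agent a with Owns bc a α if and only if some entry of bc is a mint of α; in particular every minted asset has exactly one owner and every asset never minted in bc has no owner. -/
variable {Agent Asset : Type*}

/-!
The owner of an asset is read off the last token entry for it, so it is unique and exists as soon as
there is a token entry at all. In a valid ledger this amounts to a mint: before the first token
entry the asset has no current owner, so that entry cannot be a transfer.
-/

section

variable [DecidableEq Asset] {bc : List (Entry Agent Asset)} {a b : Agent} {α : Asset}

theorem currentOwner_eq_findSome?_reverse (bc : List (Entry Agent Asset)) (α : Asset) :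
    currentOwner bc α = bc.reverse.findSome? (tokenOwner · α) := by
  induction bc using List.reverseRecOn with
  | nil => rfl
  | append_singleton bc e ih =>
    simp only [currentOwner] at ih
    simp only [currentOwner, List.foldl_append, List.foldl_cons, List.foldl_nil, ih,
      List.reverse_append, List.reverse_singleton, List.singleton_append, List.findSome?_cons]
    cases tokenOwner e α <;> rfl

theorem currentOwner_eq_none_iff_s15 :
    currentOwner bc α = none ↔ ∀ e ∈ bc, tokenOwner e α = none := by
  simp only [currentOwner_eq_findSome?_reverse, List.findSome?_eq_none_iff, List.mem_reverse]

theorem currentOwner_eq_some_iff :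
    currentOwner bc α = some a ↔
      ∃ p e s, bc = p ++ e :: s ∧ tokenOwner e α = some a ∧ ∀ x ∈ s, tokenOwner x α = none := by
  rw [currentOwner_eq_findSome?_reverse, List.findSome?_eq_some_iff]
  constructor
  · rintro ⟨s, e, p, hbc, he, hs⟩
    refine ⟨p.reverse, e, s.reverse, ?_, he, by simpa only [List.mem_reverse] using hs⟩
    simpa using congrArg List.reverse hbc
  · rintro ⟨p, e, s, rfl, he, hs⟩
    exact ⟨s.reverse, e, p.reverse, by simp, he, by simpa only [List.mem_reverse] using hs⟩

theorem owns_iff_exists_append :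
    Owns bc a α ↔
      ∃ p e s, bc = p ++ e :: s ∧ tokenOwner e α = some a ∧ ∀ x ∈ s, tokenOwner x α = none := by
  constructor
  · rintro ⟨i, hi, hlast⟩
    refine ⟨bc.take i, bc.get i, bc.drop (i + 1), by simp, hi, fun x hx => ?_⟩
    obtain ⟨k, hk, rfl⟩ := List.mem_drop_iff_getElem.1 hx
    exact hlast ⟨i + 1 + k, by omega⟩ (by simp only; omega)
  · rintro ⟨p, e, s, rfl, he, hs⟩
    refine ⟨⟨p.length, by simp⟩, by simpa using he, fun ⟨j, hj⟩ hlt => hs _ ?_⟩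
    obtain ⟨k, rfl⟩ := Nat.exists_eq_add_of_lt hlt
    simp [List.getElem_append_right, Nat.add_assoc]

theorem owns_iff_currentOwner_eq_some : Owns bc a α ↔ currentOwner bc α = some a :=
  owns_iff_exists_append.trans currentOwner_eq_some_iff.symm

theorem exists_owns_iff : (∃ a, Owns bc a α) ↔ ∃ e ∈ bc, tokenOwner e α ≠ none := by
  simp only [owns_iff_currentOwner_eq_some, ← Option.ne_none_iff_exists', ne_eq,
    currentOwner_eq_none_iff_s15, not_forall, exists_prop]

theorem Owns.unique (ha : Owns bc a α) (hb : Owns bc b α) : a = b := by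
  rw [owns_iff_currentOwner_eq_some] at ha hb
  exact Option.some.inj (ha.symm.trans hb)

theorem existsUnique_owns_iff_exists_owns : (∃! a, Owns bc a α) ↔ ∃ a, Owns bc a α :=
  ⟨ExistsUnique.exists, fun h => existsUnique_of_exists_of_unique h fun _ _ => Owns.unique⟩

theorem eq_mint_or_eq_transfer_of_tokenOwner_eq_some {e : Entry Agent Asset}
    (he : tokenOwner e α = some a) : e = .mint a α ∨ ∃ old, e = .transfer old a α := by
  cases e <;> simp_all [tokenOwner]

theorem Valid.currentOwner_eq_some_of_append_transfer_cons {p s : List (Entry Agent Asset)}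
    {old new : Agent} (h : Valid (p ++ .transfer old new α :: s)) :
    currentOwner p α = some old := by
  simpa using h ⟨p.length, by simp⟩

theorem Valid.eq_mint_of_append_cons {p s : List (Entry Agent Asset)} {e : Entry Agent Asset}
    (h : Valid (p ++ e :: s)) (hp : ∀ x ∈ p, tokenOwner x α = none)
    (he : tokenOwner e α = some a) : e = .mint a α := by
  rcases eq_mint_or_eq_transfer_of_tokenOwner_eq_some he with hmint | ⟨old, rfl⟩
  · exact hmint
  · have hold := h.currentOwner_eq_some_of_append_transfer_cons
    rw [currentOwner_eq_none_iff_s15.2 hp] at hold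
    contradiction

theorem Valid.exists_mint_mem_iff (h : Valid bc) :
    (∃ a, .mint a α ∈ bc) ↔ ∃ e ∈ bc, tokenOwner e α ≠ none := by
  constructor
  · rintro ⟨a, ha⟩
    exact ⟨_, ha, by simp [tokenOwner]⟩
  · rintro ⟨x, hx, hne⟩
    obtain ⟨a, hfirst⟩ : ∃ a, bc.findSome? (tokenOwner · α) = some a :=
      Option.ne_none_iff_exists'.1 fun hnone => hne (List.findSome?_eq_none_iff.1 hnone x hx)
    obtain ⟨p, e, s, rfl, he, hp⟩ := List.findSome?_eq_some_iff.1 hfirst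
    obtain rfl := h.eq_mint_of_append_cons hp he
    exact ⟨a, by simp⟩

end

theorem blockchain_correctness [DecidableEq Asset]
    (bc : List (Entry Agent Asset)) (h : Valid bc) (α : Asset) :
    (∃! a : Agent, Owns bc a α) ↔ (∃ a : Agent, Entry.mint a α ∈ bc) :=
  calc
    (∃! a, Owns bc a α) ↔ ∃ a, Owns bc a α := existsUnique_owns_iff_exists_owns
    _ ↔ ∃ e ∈ bc, tokenOwner e α ≠ none := exists_owns_iff
    _ ↔ ∃ a, Entry.mint a α ∈ bc := h.exists_mint_mem_iff.symm
end
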